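/- Let u be a nonconstant harmonic polynomial on ℝ² of degree d. Then the singular set S(u) = {z ∈ ℝ² : u(z) = 0 and ∇u(z) = 0} is finite, the set {u ≠ 0} has a finite number k of connected components, and the algebraic formula k = 1 + d + ∑_{z ∈ S(u)} (ord_z(u) − 1) holds, where ord_z(u) is the order of vanishing of u at z. -/

import Mathlib

open MeasureTheory Metric Filter

/-- The set of connected components of a subset `S` of a topological space. -/
def nodalComponents {X : Type*} [TopologicalSpace X] (S : Set X) : Set (Set X) :=
  {C | ∃ x ∈ S, connectedComponentIn S x = C}

/-- A polynomial `P ∈ ℝ[x₁,…,xₙ]` is harmonic if `∑ i, ∂²P/∂xᵢ²` is the zero polynomial. -/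
def IsHarmonicPoly {n : ℕ} (P : MvPolynomial (Fin n) ℝ) : Prop :=
  ∑ i, MvPolynomial.pderiv i (MvPolynomial.pderiv i P) = 0

/-- The polynomial function on ℝⁿ associated with `P ∈ ℝ[x₁,…,xₙ]`. -/
noncomputable def polyFun {n : ℕ} (P : MvPolynomial (Fin n) ℝ)
    (x : EuclideanSpace ℝ (Fin n)) : ℝ :=
  MvPolynomial.eval (fun i => x i) P

/-- The singular set `S(u) = {z : u(z) = 0, ∇u(z) = 0}` of the polynomial function of `P`. -/
def singSet {n : ℕ} (P : MvPolynomial (Fin n) ℝ) : Set (EuclideanSpace ℝ (Fin n)) :=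
  {z | polyFun P z = 0 ∧ ∀ i, polyFun (MvPolynomial.pderiv i P) z = 0}

/-- The order of vanishing of `P` at `z`: the smallest total degree of a nonzero term
in the expansion of `P(z + x)` in powers of `x`. -/
noncomputable def vanishOrder {n : ℕ} (P : MvPolynomial (Fin n) ℝ)
    (z : EuclideanSpace ℝ (Fin n)) : ℕ :=
  sInf {k | MvPolynomial.homogeneousComponent k
    (MvPolynomial.aeval (fun i => MvPolynomial.X i + MvPolynomial.C (z i)) P) ≠ 0}

/-!
A harmonic polynomial on the plane is the real part of a complex polynomial `F` of the same degree
`d`; its singular points are the critical points of `F` over the imaginary axis, and its order of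
vanishing there exceeds the multiplicity of the critical point by one.

For a convex open nonempty set `H` of values, let `N(H)` be the number of components of `F⁻¹(H)`
plus the number of critical points in `F⁻¹(H)`, counted with multiplicity. If `H` contains at most
one critical value, `F⁻¹(H)` retracts onto a single fibre and `N(H) = d`. Slicing a convex set by
two overlapping half-planes whose intersection contains no critical value, the Mayer–Vietoris
sequence gives `N(A) + N(B) ≤ N(A ∪ B) + d`, so `d ≤ N(H)` by induction on the number of critical
values in `H`. As `N(ℂ) = d`, the same inequality applied to two half-planes covering `ℂ` forces
`N = d` on each of them. Adding up `N = d` for the two sides of the imaginary axis and subtracting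
the `d - 1` critical points of `F` yields the formula.
-/

section Components

open Topology

variable {X Y : Type*} [TopologicalSpace X] [TopologicalSpace Y] {A B : Set X}

namespace nodalComponents

/-- The connected component of the point `x` of `A`, as an element of `nodalComponents A`. -/
def mk {x : X} (hx : x ∈ A) : nodalComponents A :=
  ⟨connectedComponentIn A x, x, hx, rfl⟩

lemma exists_mk_eq (U : nodalComponents A) : ∃ x, ∃ hx : x ∈ A, mk hx = U := by
  obtain ⟨_, x, hx, rfl⟩ := U
  exact ⟨x, hx, rfl⟩

lemma mk_eq_mk {x y : X} {hx : x ∈ A} {hy : y ∈ A} :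
    mk hx = mk hy ↔ y ∈ connectedComponentIn A x := by
  rw [Subtype.ext_iff]
  exact ⟨fun h ↦ h.symm.subset (mem_connectedComponentIn hy), connectedComponentIn_eq⟩

/-- The map induced on connected components by an inclusion `A ⊆ B`. -/
noncomputable def map (h : A ⊆ B) (U : nodalComponents A) : nodalComponents B :=
  mk (h (exists_mk_eq U).choose_spec.choose)

lemma map_mk (h : A ⊆ B) {x : X} (hx : x ∈ A) : map h (mk hx) = mk (h hx) := by
  have hU := (exists_mk_eq (mk hx)).choose_spec.choose_spec
  exact mk_eq_mk.2 (connectedComponentIn_mono _ h (mk_eq_mk.1 hU))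

lemma eventually_mk_eq_mk [LocallyConnectedSpace X] (hA : IsOpen A) {x : X} (hx : x ∈ A) :
    ∀ᶠ y in 𝓝 x, ∃ hy : y ∈ A, mk hx = mk hy := by
  filter_upwards [hA.connectedComponentIn.mem_nhds (mem_connectedComponentIn hx)] with y hy
  exact ⟨connectedComponentIn_subset A x hy, mk_eq_mk.2 hy⟩

lemma eq_of_mk_eq_mk {R : Type*} {g : ∀ x ∈ A, R}
    (hg : ∀ x hx, ∀ᶠ y in 𝓝 x, ∀ hy, g x hx = g y hy) {x y : X} {hx : x ∈ A} {hy : y ∈ A}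
    (hxy : mk hx = mk hy) : g x hx = g y hy := by
  have hA := connectedComponentIn_subset A x
  refine (isPreconnected_connectedComponentIn.induction₂ (fun y z ↦ ∀ hy hz, g y hy = g z hz)
    (fun y hy ↦ ?_) (fun y z w _ hz _ hyz hzw hy' hw ↦ (hyz hy' (hA hz)).trans (hzw (hA hz) hw))
    (fun y z _ _ hyz hz hy ↦ (hyz hy hz).symm)
    (mem_connectedComponentIn hx) (mk_eq_mk.1 hxy)) hx hy
  filter_upwards [nhdsWithin_le_nhds (hg y (hA hy))] with z hz _ using hz

end nodalComponents

open nodalComponents hiding map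

lemma connectedComponentIn_union_eq_left (hA : IsOpen A) (hB : IsOpen B) (hAB : Disjoint A B)
    {x : X} (hx : x ∈ A) : connectedComponentIn (A ∪ B) x = connectedComponentIn A x := by
  have hxAB : x ∈ A ∪ B := Or.inl hx
  refine Set.Subset.antisymm ?_ (connectedComponentIn_mono x Set.subset_union_left)
  refine isPreconnected_connectedComponentIn.subset_connectedComponentIn
    (mem_connectedComponentIn hxAB) ?_
  exact isPreconnected_connectedComponentIn.subset_left_of_subset_union hA hB hAB
    (connectedComponentIn_subset _ _) ⟨x, mem_connectedComponentIn hxAB, hx⟩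

lemma nodalComponents_union (hA : IsOpen A) (hB : IsOpen B) (hAB : Disjoint A B) :
    nodalComponents (A ∪ B) = nodalComponents A ∪ nodalComponents B := by
  have hleft {x : X} (hx : x ∈ A) := connectedComponentIn_union_eq_left hA hB hAB hx
  have hright {x : X} (hx : x ∈ B) :
      connectedComponentIn (A ∪ B) x = connectedComponentIn B x :=
    Set.union_comm A B ▸ connectedComponentIn_union_eq_left hB hA hAB.symm hx
  ext U
  constructor
  · rintro ⟨x, hx | hx, rfl⟩
    · exact Or.inl ⟨x, hx, (hleft hx).symm⟩
    · exact Or.inr ⟨x, hx, (hright hx).symm⟩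
  · rintro (⟨x, hx, rfl⟩ | ⟨x, hx, rfl⟩)
    · exact ⟨x, Or.inl hx, hleft hx⟩
    · exact ⟨x, Or.inr hx, hright hx⟩

lemma disjoint_nodalComponents (hAB : Disjoint A B) :
    Disjoint (nodalComponents A) (nodalComponents B) := by
  rw [Set.disjoint_left]
  rintro _ ⟨x, hx, rfl⟩ ⟨y, -, hy⟩
  exact hAB.notMem_of_mem_left hx
    (connectedComponentIn_subset B y (hy ▸ mem_connectedComponentIn hx))

lemma nodalComponents_image (e : X ≃ₜ Y) (A : Set X) :
    nodalComponents (e '' A) = (e '' ·) '' nodalComponents A := by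
  ext U
  constructor
  · rintro ⟨_, ⟨x, hx, rfl⟩, rfl⟩
    exact ⟨_, ⟨x, hx, rfl⟩, e.image_connectedComponentIn hx⟩
  · rintro ⟨_, ⟨x, hx, rfl⟩, rfl⟩
    exact ⟨e x, ⟨x, hx, rfl⟩, (e.image_connectedComponentIn hx).symm⟩

/-- The beginning `H⁰(A ∪ B) → H⁰(A) × H⁰(B) → H⁰(A ∩ B)` of the Mayer–Vietoris sequence, where
`H⁰` is the space of real functions that are constant on connected components: the first map. -/
noncomputable def restrictPair (A B : Set X) :
    (nodalComponents (A ∪ B) → ℝ) →ₗ[ℝ] (nodalComponents A → ℝ) × (nodalComponents B → ℝ) :=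
  (LinearMap.funLeft ℝ ℝ (nodalComponents.map Set.subset_union_left)).prod
    (LinearMap.funLeft ℝ ℝ (nodalComponents.map Set.subset_union_right))

/-- The second map `H⁰(A) × H⁰(B) → H⁰(A ∩ B)` of the Mayer–Vietoris sequence. -/
noncomputable def differenceOnInter (A B : Set X) :
    (nodalComponents A → ℝ) × (nodalComponents B → ℝ) →ₗ[ℝ] (nodalComponents (A ∩ B : Set X) → ℝ) :=
  LinearMap.funLeft ℝ ℝ (nodalComponents.map Set.inter_subset_left) ∘ₗ LinearMap.fst ℝ _ _ -
    LinearMap.funLeft ℝ ℝ (nodalComponents.map Set.inter_subset_right) ∘ₗ LinearMap.snd ℝ _ _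

lemma exists_map_eq_of_map_eq_on_inter [LocallyConnectedSpace X] {R : Type*} (hA : IsOpen A)
    (hB : IsOpen B) {a : nodalComponents A → R} {b : nodalComponents B → R}
    (hab : ∀ x (hx : x ∈ A ∩ B), a (mk hx.1) = b (mk hx.2)) :
    ∃ c : nodalComponents (A ∪ B) → R,
      (∀ x (hx : x ∈ A), c (mk (Or.inl hx)) = a (mk hx)) ∧
      ∀ x (hx : x ∈ B), c (mk (Or.inr hx)) = b (mk hx) := by
  classical
  let g (x : X) (hx : x ∈ A ∪ B) : R :=
    if hxA : x ∈ A then a (mk hxA) else b (mk (hx.resolve_left hxA))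
  have hgA {x} (hx : x ∈ A) : g x (Or.inl hx) = a (mk hx) := dif_pos hx
  have hgB {x} (hx : x ∈ B) : g x (Or.inr hx) = b (mk hx) := by
    by_cases hxA : x ∈ A
    · exact (hgA hxA).trans (hab x ⟨hxA, hx⟩)
    · exact dif_neg hxA
  have hg x (hx : x ∈ A ∪ B) : ∀ᶠ y in 𝓝 x, ∀ hy, g x hx = g y hy := by
    rcases hx with hx | hx
    · filter_upwards [eventually_mk_eq_mk hA hx] with y ⟨hyA, hxy⟩ _
      exact (hgA hx).trans ((congrArg a hxy).trans (hgA hyA).symm)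
    · filter_upwards [eventually_mk_eq_mk hB hx] with y ⟨hyB, hxy⟩ _
      exact (hgB hx).trans ((congrArg b hxy).trans (hgB hyB).symm)
  have hmk (U : nodalComponents (A ∪ B)) := (exists_mk_eq U).choose_spec.choose_spec
  exact ⟨fun U ↦ g _ (exists_mk_eq U).choose_spec.choose,
    fun x hx ↦ (eq_of_mk_eq_mk hg (hmk _)).trans (hgA hx),
    fun x hx ↦ (eq_of_mk_eq_mk hg (hmk _)).trans (hgB hx)⟩

lemma ker_differenceOnInter_le [LocallyConnectedSpace X] (hA : IsOpen A) (hB : IsOpen B) :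
    LinearMap.ker (differenceOnInter A B) ≤ LinearMap.range (restrictPair A B) := by
  rintro ⟨a, b⟩ hab
  obtain ⟨c, hcA, hcB⟩ := exists_map_eq_of_map_eq_on_inter hA hB (a := a) (b := b)
    fun x hx ↦ by
      have h := congrFun hab (mk hx)
      simpa [differenceOnInter, LinearMap.funLeft, nodalComponents.map_mk, sub_eq_zero] using h
  refine ⟨c, Prod.ext (funext fun U ↦ ?_) (funext fun U ↦ ?_)⟩
  · obtain ⟨x, hx, rfl⟩ := exists_mk_eq U
    simpa [restrictPair, LinearMap.funLeft, nodalComponents.map_mk] using hcA x hx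
  · obtain ⟨x, hx, rfl⟩ := exists_mk_eq U
    simpa [restrictPair, LinearMap.funLeft, nodalComponents.map_mk] using hcB x hx

theorem ncard_nodalComponents_add_le [LocallyConnectedSpace X] (hA : IsOpen A) (hB : IsOpen B)
    (hfA : (nodalComponents A).Finite) (hfB : (nodalComponents B).Finite)
    (hfU : (nodalComponents (A ∪ B)).Finite) (hfI : (nodalComponents (A ∩ B)).Finite) :
    (nodalComponents A).ncard + (nodalComponents B).ncard ≤
      (nodalComponents (A ∪ B)).ncard + (nodalComponents (A ∩ B)).ncard := by
  have := hfA.fintype; have := hfB.fintype; have := hfU.fintype; have := hfI.fintype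
  have hrank := (differenceOnInter A B).finrank_range_add_finrank_ker
  have hker := Submodule.finrank_mono (ker_differenceOnInter_le hA hB)
  have hT := (restrictPair A B).finrank_range_le
  have hS := (LinearMap.range (differenceOnInter A B)).finrank_le
  simp only [Module.finrank_prod, Module.finrank_fintype_fun_eq_card,
    ← Nat.card_eq_fintype_card, Nat.card_coe_set_eq] at hrank hT hS
  lia

end Components

section Sections

open Topology

variable {E V : Type*} [TopologicalSpace E] [TopologicalSpace V] {f : E → V} {Q : Set V}
  {s : V → E}

/-- `s` is a continuous section over `Q` of the map `f`. -/
def IsSectionOn (f : E → V) (Q : Set V) (s : V → E) : Prop :=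
  ContinuousOn s Q ∧ Set.LeftInvOn f s Q

lemma IsSectionOn.mono {Q' : Set V} (hs : IsSectionOn f Q s) (hQ : Q' ⊆ Q) :
    IsSectionOn f Q' s :=
  ⟨hs.1.mono hQ, hs.2.mono hQ⟩

lemma IsSectionOn.eventually_apply_eq {S : Set V} {x : E} (hf : IsCoveringMapOn f S)
    (hQo : IsOpen Q) (hQS : Q ⊆ S) (hs : IsSectionOn f Q s) (hx : f x ∈ Q) (hsx : s (f x) = x) :
    ∀ᶠ y in 𝓝 x, s (f y) = y := by
  obtain ⟨e, hxe, rfl⟩ := hf.isLocalHomeomorphOn x (hQS hx)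
  have hex : ContinuousAt e x := e.continuousAt hxe
  have hsex : Tendsto (fun y ↦ s (e y)) (𝓝 x) (𝓝 x) := by
    simpa [hsx, Function.comp_def] using (hs.1.continuousAt (hQo.mem_nhds hx)).tendsto.comp hex
  filter_upwards [e.open_source.mem_nhds hxe, hsex (e.open_source.mem_nhds hxe),
    hex (hQo.mem_nhds hx)] with y hy hsy hyQ
  exact e.injOn hsy hy (hs.2 hyQ)

end Sections

section ConvexSections

open Topology

variable {E V : Type*} [TopologicalSpace E] [NormedAddCommGroup V] [NormedSpace ℝ V]
  {f : E → V} {S Q : Set V} {s s' : V → E} {x : E}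

lemma existsUnique_lift_of_convex (hf : IsCoveringMapOn f S) (hQo : IsOpen Q) (hQ : Convex ℝ Q)
    (hQS : Q ⊆ S) (hx : f x ∈ Q) :
    ∃! g : C(Q, E), g ⟨f x, hx⟩ = x ∧ f ∘ g = Subtype.val := by
  have := hQ.contractibleSpace ⟨_, hx⟩
  have := SimplyConnectedSpace.ofContractible Q
  have := hQo.locallyPathConnectedSpace
  exact hf.existsUnique_continuousMap_lifts ⟨Subtype.val, continuous_subtype_val⟩
    (a₀ := ⟨f x, hx⟩) rfl fun y ↦ hQS y.2

lemma exists_isSectionOn (hf : IsCoveringMapOn f S) (hQo : IsOpen Q) (hQ : Convex ℝ Q)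
    (hQS : Q ⊆ S) (hx : f x ∈ Q) : ∃ s, IsSectionOn f Q s ∧ s (f x) = x := by
  classical
  obtain ⟨g, ⟨hgx, hg⟩, -⟩ := existsUnique_lift_of_convex hf hQo hQ hQS hx
  have hgs (w : Q) : (if hw : w.1 ∈ Q then g ⟨w, hw⟩ else x) = g w := dif_pos w.2
  refine ⟨fun w ↦ if hw : w ∈ Q then g ⟨w, hw⟩ else x, ⟨?_, fun w hw ↦ ?_⟩,
    (hgs ⟨f x, hx⟩).trans hgx⟩
  · rw [continuousOn_iff_continuous_domRestrict]
    exact g.continuous.congr fun w ↦ (hgs w).symm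
  · exact (congrArg f (hgs ⟨w, hw⟩)).trans (congrFun hg ⟨w, hw⟩)

lemma IsSectionOn.eqOn (hf : IsCoveringMapOn f S) (hQo : IsOpen Q) (hQ : Convex ℝ Q)
    (hQS : Q ⊆ S) (hs : IsSectionOn f Q s) (hs' : IsSectionOn f Q s') (hx : f x ∈ Q)
    (hsx : s (f x) = x) (hsx' : s' (f x) = x) : Set.EqOn s s' Q := fun w hw ↦ by
  have hlift {s : V → E} (hs : IsSectionOn f Q s) (hsx : s (f x) = x) :
      (⟨Q.domRestrict s, hs.1.domRestrict⟩ : C(Q, E)) ⟨f x, hx⟩ = x ∧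
        f ∘ (⟨Q.domRestrict s, hs.1.domRestrict⟩ : C(Q, E)) = Subtype.val :=
    ⟨hsx, funext fun y ↦ hs.2 y.2⟩
  exact DFunLike.congr_fun ((existsUnique_lift_of_convex hf hQo hQ hQS hx).unique
    (hlift hs hsx) (hlift hs' hsx')) ⟨w, hw⟩

/-- Pairwise disjoint open neighbourhoods `U p` of the points `p` of the fibre of `f` over `v`,
covering all fibres over a convex neighbourhood `W` of `v`. -/
structure IsFiberSeparation (f : E → V) (v : V) (W : Set V) (U : E → Set E) : Prop where
  mem_nhds : W ∈ 𝓝 v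
  convex : Convex ℝ W
  isOpen (p : E) : IsOpen (U p)
  mem_self (p : E) : p ∈ U p
  pairwiseDisjoint : (f ⁻¹' {v}).PairwiseDisjoint U
  preimage_subset : f ⁻¹' W ⊆ ⋃ p ∈ f ⁻¹' {v}, U p

lemma exists_isFiberSeparation [T2Space E] (hf : IsClosedMap f) {v : V}
    (hv : (f ⁻¹' {v}).Finite) : ∃ W U, IsFiberSeparation f v W U := by
  obtain ⟨U, hU, hdisj⟩ := hv.t2_separation
  have hcover : ∀ᶠ w in 𝓝 v, f ⁻¹' {w} ⊆ ⋃ p ∈ f ⁻¹' {v}, U p :=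
    hf.eventually_nhds_fiber v fun p hp ↦
      (isOpen_biUnion fun q _ ↦ (hU q).2).mem_nhds (Set.mem_biUnion hp (hU p).1)
  obtain ⟨δ, hδ, hW⟩ := Metric.eventually_nhds_iff_ball.1 hcover
  exact ⟨ball v δ, U, ball_mem_nhds v hδ, convex_ball v δ, fun p ↦ (hU p).2, fun p ↦ (hU p).1,
    hdisj, fun x hx ↦ hW _ hx rfl⟩

lemma IsFiberSeparation.section_mem {v : V} {W : Set V} {U : E → Set E}
    (h : IsFiberSeparation f v W U) (hQ : Convex ℝ Q) (hs : IsSectionOn f Q s) {p : E}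
    (hp : f p = v) {w w' : V} (hw : w ∈ Q ∩ W) (hsw : s w ∈ U p) (hw' : w' ∈ Q ∩ W) :
    s w' ∈ U p := by
  have hconn : IsPreconnected (s '' (Q ∩ W)) :=
    (hQ.inter h.convex).isPreconnected.image s (hs.1.mono Set.inter_subset_left)
  refine hconn.subset_left_of_subset_union (v := ⋃ q ∈ f ⁻¹' {v} \ {p}, U q) (h.isOpen p)
    (isOpen_biUnion fun q _ ↦ h.isOpen q)
    (Set.disjoint_iUnion₂_right.2 fun q hq ↦ h.pairwiseDisjoint hp hq.1 (Ne.symm hq.2)) ?_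
    ⟨_, Set.mem_image_of_mem s hw, hsw⟩ (Set.mem_image_of_mem s hw')
  rintro _ ⟨y, hy, rfl⟩
  have hyW : f (s y) ∈ W := (hs.2 hy.1).symm ▸ hy.2
  obtain ⟨q, hq, hyq⟩ := Set.mem_iUnion₂.1 (h.preimage_subset hyW)
  by_cases hqp : q = p
  · exact Or.inl (hqp ▸ hyq)
  · exact Or.inr (Set.mem_biUnion ⟨hq, hqp⟩ hyq)

lemma IsFiberSeparation.tendsto_section {v : V} {W : Set V} {U : E → Set E}
    (h : IsFiberSeparation f v W U) (hf : IsClosedMap f) (hQ : Convex ℝ Q)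
    (hs : IsSectionOn f Q s) {p : E} (hp : f p = v) {w : V} (hw : w ∈ Q ∩ W) (hsw : s w ∈ U p) :
    Tendsto s (𝓝[Q] v) (𝓝 p) := by
  intro N hN
  have hfiber : ∀ᶠ w in 𝓝 v, ∀ x ∈ f ⁻¹' {w}, x ∈ U p → x ∈ N :=
    hf.eventually_nhds_fiber v fun q hq ↦ by
      by_cases hqp : q = p
      · filter_upwards [hqp ▸ hN] with x hx _ using hx
      · filter_upwards [(h.isOpen q).mem_nhds (h.mem_self q)] with x hxq hxp
        exact ((h.pairwiseDisjoint hq hp hqp).notMem_of_mem_left hxq hxp).elim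
  change ∀ᶠ w in 𝓝[Q] v, s w ∈ N
  filter_upwards [nhdsWithin_le_nhds hfiber, nhdsWithin_le_nhds h.mem_nhds, self_mem_nhdsWithin]
    with y hy hyW hyQ
  exact hy _ (hs.2 hyQ) (h.section_mem hQ hs hp hw hsw ⟨hyQ, hyW⟩)

end ConvexSections

section Branched

open Topology

variable {E V : Type*} [TopologicalSpace E] [NormedAddCommGroup V] [NormedSpace ℝ V]
  {f : E → V} {H : Set V} {v : V} {x p q : E}

/-- `s` is a section of `f` through the point `x`, over a convex open subset `Q` of `H \ {v}`
that is adherent to `v`. -/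
structure IsAdherentSection (f : E → V) (H : Set V) (v : V) (x : E) (Q : Set V) (s : V → E) :
    Prop where
  isOpen : IsOpen Q
  convex : Convex ℝ Q
  subset : Q ⊆ H \ {v}
  mem_closure : v ∈ closure Q
  mem : f x ∈ Q
  isSectionOn : IsSectionOn f Q s
  apply_eq : s (f x) = x

/-- The point `x` retracts to the point `p` of the fibre over `v`: either `x = p`, or a section
through `x` over a convex subset of `H` tends to `p` at `v`. -/
def RetractsTo (f : E → V) (H : Set V) (v : V) (x p : E) : Prop :=
  (x = p ∧ f p = v) ∨ ∃ Q s, IsAdherentSection f H v x Q s ∧ Tendsto s (𝓝[Q] v) (𝓝 p)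

lemma IsAdherentSection.apply_ne {Q : Set V} {s : V → E} (h : IsAdherentSection f H v x Q s) :
    f x ≠ v :=
  (h.subset h.mem).2

lemma IsAdherentSection.openSegment_subset {Q : Set V} {s : V → E}
    (h : IsAdherentSection f H v x Q s) : openSegment ℝ v (f x) ⊆ Q :=
  (h.convex.openSegment_closure_interior_subset_interior h.mem_closure
    (h.isOpen.interior_eq.symm ▸ h.mem)).trans interior_subset

lemma mem_closure_of_openSegment_subset {w : V} {Q : Set V} (h : openSegment ℝ v w ⊆ Q) :
    v ∈ closure Q :=
  closure_mono h (segment_subset_closure_openSegment (left_mem_segment ℝ v w))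

lemma IsAdherentSection.tendsto_unique [T2Space E] (hcov : IsCoveringMapOn f (H \ {v}))
    {Q Q' : Set V} {s s' : V → E} (h : IsAdherentSection f H v x Q s)
    (h' : IsAdherentSection f H v x Q' s') (hp : Tendsto s (𝓝[Q] v) (𝓝 p))
    (hq : Tendsto s' (𝓝[Q'] v) (𝓝 q)) : p = q := by
  have := mem_closure_iff_nhdsWithin_neBot.1 (mem_closure_of_openSegment_subset
    (Set.subset_inter h.openSegment_subset h'.openSegment_subset))
  have heq : Set.EqOn s s' (Q ∩ Q') :=
    (h.isSectionOn.mono Set.inter_subset_left).eqOn hcov (h.isOpen.inter h'.isOpen)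
      (h.convex.inter h'.convex) (Set.inter_subset_left.trans h.subset)
      (h'.isSectionOn.mono Set.inter_subset_right) ⟨h.mem, h'.mem⟩ h.apply_eq h'.apply_eq
  exact tendsto_nhds_unique_of_eventuallyEq
    (hp.mono_left (nhdsWithin_mono v Set.inter_subset_left))
    (hq.mono_left (nhdsWithin_mono v Set.inter_subset_right)) heq.eventuallyEq_nhdsWithin

lemma RetractsTo.unique [T2Space E] (hcov : IsCoveringMapOn f (H \ {v}))
    (hp : RetractsTo f H v x p) (hq : RetractsTo f H v x q) : p = q := by
  rcases hp with ⟨rfl, hxv⟩ | ⟨Q, s, h, hp⟩ <;> rcases hq with ⟨rfl, hxv'⟩ | ⟨Q', s', h', hq⟩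
  · rfl
  · exact (h'.apply_ne hxv).elim
  · exact (h.apply_ne hxv').elim
  · exact h.tendsto_unique hcov h' hp hq

lemma exists_isAdherentSection (hcov : IsCoveringMapOn f (H \ {v})) (hHo : IsOpen H)
    (hH : Convex ℝ H) (hv : v ∈ H) (hxH : f x ∈ H) (hxv : f x ≠ v) :
    ∃ Q s, IsAdherentSection f H v x Q s := by
  obtain ⟨φ, hφ⟩ := geometric_hahn_banach_point_point hxv.symm
  have hQo : IsOpen (H ∩ {w | φ v < φ w}) := hHo.inter (isOpen_lt continuous_const φ.continuous)
  have hQ : Convex ℝ (H ∩ {w | φ v < φ w}) :=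
    hH.inter (convex_halfSpace_gt φ.toLinearMap.isLinear (φ v))
  have hQH : H ∩ {w | φ v < φ w} ⊆ H \ {v} :=
    fun w hw ↦ ⟨hw.1, fun hwv ↦ hw.2.ne (congrArg φ hwv).symm⟩
  obtain ⟨s, hs, hsx⟩ := exists_isSectionOn hcov hQo hQ hQH ⟨hxH, hφ⟩
  refine ⟨_, s, hQo, hQ, hQH, mem_closure_of_openSegment_subset (w := f x) ?_, ⟨hxH, hφ⟩, hs, hsx⟩
  rintro w hw
  refine ⟨hH.segment_subset hv hxH (openSegment_subset_segment ℝ _ _ hw), ?_⟩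
  obtain ⟨a, b, -, hb, hab, rfl⟩ := hw
  have hbφ := mul_lt_mul_of_pos_left hφ hb
  simp only [Set.mem_ofPred_eq, map_add, map_smul, smul_eq_mul]
  linear_combination hbφ - φ v * hab

lemma exists_retractsTo [T2Space E] (hf : IsClosedMap f) (hfin : (f ⁻¹' {v}).Finite)
    (hcov : IsCoveringMapOn f (H \ {v})) (hHo : IsOpen H) (hH : Convex ℝ H) (hv : v ∈ H)
    (hx : f x ∈ H) : ∃ p, RetractsTo f H v x p := by
  by_cases hxv : f x = v
  · exact ⟨x, Or.inl ⟨rfl, hxv⟩⟩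
  obtain ⟨W, U, hWU⟩ := exists_isFiberSeparation hf hfin
  obtain ⟨Q, s, h⟩ := exists_isAdherentSection hcov hHo hH hv hx hxv
  obtain ⟨w, hwW, hwQ⟩ := mem_closure_iff_nhds.1 h.mem_closure W hWU.mem_nhds
  have hsw : f (s w) ∈ W := (h.isSectionOn.2 hwQ).symm ▸ hwW
  obtain ⟨p, hp, hwp⟩ := Set.mem_iUnion₂.1 (hWU.preimage_subset hsw)
  exact ⟨p, Or.inr ⟨Q, s, h, hWU.tendsto_section hf h.convex h.isSectionOn hp ⟨hwQ, hwW⟩ hwp⟩⟩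

lemma eventually_retractsTo_self [T2Space E] (hf : IsClosedMap f) (hfc : Continuous f)
    (hfin : (f ⁻¹' {v}).Finite) (hcov : IsCoveringMapOn f (H \ {v})) (hHo : IsOpen H)
    (hH : Convex ℝ H) (hv : v ∈ H) (hp : f p = v) : ∀ᶠ x in 𝓝 p, RetractsTo f H v x p := by
  obtain ⟨W, U, hWU⟩ := exists_isFiberSeparation hf hfin
  filter_upwards [(hWU.isOpen p).mem_nhds (hWU.mem_self p),
    hfc.continuousAt.preimage_mem_nhds (hp ▸ hWU.mem_nhds),
    hfc.continuousAt.preimage_mem_nhds (hHo.mem_nhds (hp ▸ hv))] with x hxU hxW hxH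
  by_cases hxv : f x = v
  · by_contra hne
    have hxp : x ≠ p := fun h ↦ hne (Or.inl ⟨h, hp⟩)
    exact (hWU.pairwiseDisjoint hxv hp hxp).notMem_of_mem_left (hWU.mem_self x) hxU
  · obtain ⟨Q, s, h⟩ := exists_isAdherentSection hcov hHo hH hv hxH hxv
    exact Or.inr ⟨Q, s, h, hWU.tendsto_section hf h.convex h.isSectionOn hp ⟨h.mem, hxW⟩
      (h.apply_eq.symm ▸ hxU)⟩

lemma RetractsTo.eventually [T2Space E] (hf : IsClosedMap f) (hfc : Continuous f)
    (hfin : (f ⁻¹' {v}).Finite) (hcov : IsCoveringMapOn f (H \ {v})) (hHo : IsOpen H)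
    (hH : Convex ℝ H) (hv : v ∈ H) (hxp : RetractsTo f H v x p) :
    ∀ᶠ y in 𝓝 x, RetractsTo f H v y p := by
  rcases hxp with ⟨rfl, hp⟩ | ⟨Q, s, h, hp⟩
  · exact eventually_retractsTo_self hf hfc hfin hcov hHo hH hv hp
  · filter_upwards [h.isSectionOn.eventually_apply_eq hcov h.isOpen h.subset h.mem h.apply_eq,
      hfc.continuousAt.preimage_mem_nhds (h.isOpen.mem_nhds h.mem)] with y hy hyQ
    exact Or.inr ⟨Q, s, ⟨h.isOpen, h.convex, h.subset, h.mem_closure, hyQ, h.isSectionOn, hy⟩, hp⟩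

theorem injOn_connectedComponentIn_preimage [T2Space E] (hf : IsClosedMap f) (hfc : Continuous f)
    (hfin : (f ⁻¹' {v}).Finite) (hcov : IsCoveringMapOn f (H \ {v})) (hHo : IsOpen H)
    (hH : Convex ℝ H) (hv : v ∈ H) :
    Set.InjOn (connectedComponentIn (f ⁻¹' H)) (f ⁻¹' {v}) := by
  intro p hp q hq hpq
  choose r hr using fun x (hx : x ∈ f ⁻¹' H) ↦ exists_retractsTo hf hfin hcov hHo hH hv hx
  have hr_self {p} (hp : f p = v) (hpH : p ∈ f ⁻¹' H) : r p hpH = p :=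
    (hr p hpH).unique hcov (Or.inl ⟨rfl, hp⟩)
  have hr_loc x (hx : x ∈ f ⁻¹' H) : ∀ᶠ y in 𝓝 x, ∀ hy, r x hx = r y hy := by
    filter_upwards [(hr x hx).eventually hf hfc hfin hcov hHo hH hv] with y hy hyH
    exact hy.unique hcov (hr y hyH)
  have hmem : f ⁻¹' {v} ⊆ f ⁻¹' H := Set.preimage_mono (Set.singleton_subset_iff.2 hv)
  have hmk : nodalComponents.mk (hmem hp) = nodalComponents.mk (hmem hq) := Subtype.ext hpq
  rw [← hr_self hp (hmem hp), ← hr_self hq (hmem hq)]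
  exact nodalComponents.eq_of_mk_eq_mk hr_loc hmk

end Branched

section PreimageComponents

variable {X Y : Type*} [TopologicalSpace X] [TopologicalSpace Y] [LocallyConnectedSpace X]
  {f : X → Y} {H : Set Y}

lemma image_connectedComponentIn_preimage (hfc : Continuous f) (hfo : IsOpenMap f)
    (hf : IsClosedMap f) (hHo : IsOpen H) (hH : IsPreconnected H) {x : X} (hx : f x ∈ H) :
    f '' connectedComponentIn (f ⁻¹' H) x = H := by
  set U := connectedComponentIn (f ⁻¹' H) x with hU
  have hUo : IsOpen U := (hHo.preimage hfc).connectedComponentIn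
  have hxU : x ∈ U := mem_connectedComponentIn hx
  have hUH : U ⊆ f ⁻¹' H := connectedComponentIn_subset _ _
  refine (Set.image_subset_iff.2 hUH).antisymm
    (hH.subset_of_closure_inter_subset (hfo U hUo) ⟨f x, hx, x, hxU, rfl⟩ ?_)
  rw [hf.closure_image_eq_of_continuous hfc]
  rintro _ ⟨⟨y, hyU, rfl⟩, hyH⟩
  refine ⟨y, ?_, rfl⟩
  obtain ⟨z, hzy, hzU⟩ := mem_closure_iff.1 hyU _ (hHo.preimage hfc).connectedComponentIn
    (mem_connectedComponentIn hyH)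
  rw [hU, connectedComponentIn_eq hzU, ← connectedComponentIn_eq hzy]
  exact mem_connectedComponentIn hyH

lemma nodalComponents_preimage_eq_image_fiber (hfc : Continuous f) (hfo : IsOpenMap f)
    (hf : IsClosedMap f) (hHo : IsOpen H) (hH : IsPreconnected H) {v : Y} (hv : v ∈ H) :
    nodalComponents (f ⁻¹' H) = connectedComponentIn (f ⁻¹' H) '' (f ⁻¹' {v}) := by
  ext U
  constructor
  · rintro ⟨x, hx, rfl⟩
    obtain ⟨p, hp, hpv⟩ := (image_connectedComponentIn_preimage hfc hfo hf hHo hH hx).symm ▸ hv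
    exact ⟨p, hpv, (connectedComponentIn_eq hp).symm⟩
  · rintro ⟨p, hp, rfl⟩
    exact ⟨p, Set.preimage_mono (Set.singleton_subset_iff.2 hv) hp, rfl⟩

end PreimageComponents

section Polynomials

open Polynomial Topology

lemma finite_support_rootMultiplicity {R : Type*} [CommRing R] [IsDomain R] (p : R[X]) :
    (Function.support p.rootMultiplicity).Finite := by
  classical
  refine p.roots.toFinset.finite_toSet.subset fun z hz ↦ ?_
  rwa [Finset.mem_coe, Multiset.mem_toFinset, ← Multiset.count_ne_zero, count_roots]

lemma finsum_rootMultiplicity {K : Type*} [Field K] [IsAlgClosed K] (p : K[X]) :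
    ∑ᶠ z, p.rootMultiplicity z = p.natDegree := by
  classical
  rw [finsum_eq_sum_of_support_subset (s := p.roots.toFinset),
    ← IsAlgClosed.card_roots_eq_natDegree, ← Multiset.toFinset_sum_count_eq]
  · simp only [count_roots]
  · intro z hz
    rwa [Finset.mem_coe, Multiset.mem_toFinset, ← Multiset.count_ne_zero, count_roots]

lemma finite_preimage_eval_singleton {R : Type*} [CommRing R] [IsDomain R] {p : R[X]}
    (hp : p.natDegree ≠ 0) (v : R) : (p.eval ⁻¹' {v}).Finite := by
  rw [preimage_eval_singleton (by rintro rfl; simp at hp)]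
  exact rootSet_finite _ _

lemma rootMultiplicity_sub_C {R : Type*} [CommRing R] [IsDomain R] [CharZero R] {p : R[X]}
    (hp : p.natDegree ≠ 0) (z : R) :
    (p - C (p.eval z)).rootMultiplicity z = p.derivative.rootMultiplicity z + 1 := by
  have hne : p - C (p.eval z) ≠ 0 := fun h ↦ hp (by rw [sub_eq_zero.1 h, natDegree_C])
  have hroot : (p - C (p.eval z)).IsRoot z := by simp [IsRoot]
  have hder := derivative_rootMultiplicity_of_root hroot
  rw [derivative_sub, derivative_C, sub_zero] at hder
  rw [hder, Nat.sub_add_cancel ((rootMultiplicity_pos hne).2 hroot)]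

variable {F : ℂ[X]} {H : Set ℂ}

/-- The set of critical values of the polynomial map `F : ℂ → ℂ`. -/
def criticalValues (F : ℂ[X]) : Set ℂ := F.eval '' {z | F.derivative.eval z = 0}

/-- The number of critical points of the polynomial map `F : ℂ → ℂ` with value in `S`, counted with
multiplicity. -/
noncomputable def ramification (F : ℂ[X]) (S : Set ℂ) : ℕ :=
  ∑ᶠ z ∈ F.eval ⁻¹' S, F.derivative.rootMultiplicity z

/-- The number of connected components of `F⁻¹(H)` plus the number of critical points in `F⁻¹(H)`.
When `H` is a disc, the Riemann–Hurwitz formula predicts that this is the degree of `F`. -/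
noncomputable def sheetCount (F : ℂ[X]) (H : Set ℂ) : ℕ :=
  (nodalComponents (F.eval ⁻¹' H)).ncard + ramification F H

lemma criticalValues_finite (hF : F.natDegree ≠ 0) : (criticalValues F).Finite :=
  (finite_setOfPred_isRoot (derivative_ne_zero.2 hF)).image _

lemma isCoveringMapOn_eval_of_disjoint (hH : Disjoint (criticalValues F) H) :
    IsCoveringMapOn F.eval H :=
  (isCoveringMapOn_eval F).mono hH.subset_compl_left

lemma ramification_union_add_inter (F : ℂ[X]) (S T : Set ℂ) :
    ramification F (S ∪ T) + ramification F (S ∩ T) = ramification F S + ramification F T :=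
  finsum_mem_union_inter' ((finite_support_rootMultiplicity _).inter_of_right _)
    ((finite_support_rootMultiplicity _).inter_of_right _)

lemma ramification_univ (F : ℂ[X]) : ramification F Set.univ = F.natDegree - 1 := by
  rw [ramification, Set.preimage_univ, finsum_mem_univ, finsum_rootMultiplicity,
    natDegree_derivative]

lemma ramification_empty (F : ℂ[X]) : ramification F ∅ = 0 := by
  rw [ramification, Set.preimage_empty, finsum_mem_empty]

lemma ramification_congr {S T : Set ℂ} (h : ∀ v ∈ criticalValues F, v ∈ S ↔ v ∈ T) :
    ramification F S = ramification F T := by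
  refine finsum_mem_inter_support_eq' _ _ _ fun z hz ↦ h _ ⟨z, ?_, rfl⟩
  by_contra hroot
  exact hz (rootMultiplicity_eq_zero hroot)

lemma ncard_fiber_add_ramification (hF : F.natDegree ≠ 0) (v : ℂ) :
    (F.eval ⁻¹' {v}).ncard + ramification F {v} = F.natDegree := by
  rw [← finsum_one, ramification, ← finsum_mem_add_distrib (finite_preimage_eval_singleton hF v),
    ← natDegree_sub_C (a := v), ← finsum_rootMultiplicity]
  have hmult : ∀ z ∈ F.eval ⁻¹' {v},
      1 + F.derivative.rootMultiplicity z = (F - C v).rootMultiplicity z := by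
    rintro z rfl
    rw [rootMultiplicity_sub_C hF, add_comm]
  rw [finsum_mem_congr rfl hmult, ← finsum_mem_univ (F - C v).rootMultiplicity]
  refine finsum_mem_inter_support_eq' _ _ _ fun z hz ↦ iff_of_true ?_ trivial
  by_contra hroot
  exact hz (rootMultiplicity_eq_zero (by simpa [IsRoot, sub_eq_zero] using hroot))

lemma finite_nodalComponents_preimage_eval (hF : F.natDegree ≠ 0) (hHo : IsOpen H)
    (hH : IsPreconnected H) : (nodalComponents (F.eval ⁻¹' H)).Finite := by
  rcases H.eq_empty_or_nonempty with rfl | ⟨v, hv⟩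
  · exact Set.finite_empty.subset fun _ ⟨_, hx, _⟩ ↦ hx.elim
  · rw [nodalComponents_preimage_eq_image_fiber F.continuous
      (isOpenQuotientMap_eval F hF).isOpenMap (isClosedMap_eval F) hHo hH hv]
    exact (finite_preimage_eval_singleton hF v).image _

lemma sheetCount_eq_natDegree (hF : F.natDegree ≠ 0) (hHo : IsOpen H) (hH : Convex ℝ H) {v : ℂ}
    (hv : v ∈ H) (hcrit : criticalValues F ∩ H ⊆ {v}) : sheetCount F H = F.natDegree := by
  have hcov : IsCoveringMapOn F.eval (H \ {v}) :=
    isCoveringMapOn_eval_of_disjoint (Set.disjoint_left.2 fun _ hc hH ↦ hH.2 (hcrit ⟨hc, hH.1⟩))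
  have hinj := injOn_connectedComponentIn_preimage (isClosedMap_eval F) F.continuous
    (finite_preimage_eval_singleton hF v) hcov hHo hH hv
  rw [sheetCount, nodalComponents_preimage_eq_image_fiber F.continuous
    (isOpenQuotientMap_eval F hF).isOpenMap (isClosedMap_eval F) hHo hH.isPreconnected hv,
    hinj.ncard_image, ramification_congr (T := {v}), ncard_fiber_add_ramification hF]
  exact fun w hw ↦ ⟨fun hwH ↦ hcrit ⟨hw, hwH⟩, fun h ↦ h ▸ hv⟩

lemma sheetCount_univ (hF : F.natDegree ≠ 0) : sheetCount F Set.univ = F.natDegree := by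
  have h : nodalComponents (Set.univ : Set ℂ) = {Set.univ} :=
    Set.eq_singleton_iff_unique_mem.2
      ⟨⟨0, trivial, isPreconnected_univ.connectedComponentIn trivial⟩,
        by rintro _ ⟨z, hz, rfl⟩; exact isPreconnected_univ.connectedComponentIn hz⟩
  rw [sheetCount, ramification_univ, Set.preimage_univ, h, Set.ncard_singleton]
  lia

lemma sheetCount_add_le (hF : F.natDegree ≠ 0) {A B : Set ℂ} (hAo : IsOpen A) (hBo : IsOpen B)
    (hA : Convex ℝ A) (hB : Convex ℝ B) (hAB : Convex ℝ (A ∪ B)) (hne : (A ∩ B).Nonempty)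
    (hcrit : Disjoint (criticalValues F) (A ∩ B)) :
    sheetCount F A + sheetCount F B ≤ sheetCount F (A ∪ B) + F.natDegree := by
  obtain ⟨v, hv⟩ := hne
  have hfin {H : Set ℂ} (hHo : IsOpen H) (hH : Convex ℝ H) :=
    finite_nodalComponents_preimage_eval hF hHo hH.isPreconnected
  have hcomp := ncard_nodalComponents_add_le (hAo.preimage F.continuous)
    (hBo.preimage F.continuous) (hfin hAo hA) (hfin hBo hB) (hfin (hAo.union hBo) hAB)
    (hfin (hAo.inter hBo) (hA.inter hB))
  have hinter := sheetCount_eq_natDegree hF (hAo.inter hBo) (hA.inter hB) hv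
    (hcrit.inter_eq.trans_subset (Set.empty_subset _))
  have hram := ramification_union_add_inter F A B
  simp only [sheetCount, Set.preimage_union, Set.preimage_inter] at *
  lia

lemma exists_gt_forall_criticalValues_le (hF : F.natDegree ≠ 0) (φ : ℂ →L[ℝ] ℝ) (a : ℝ) :
    ∃ b, a < b ∧ ∀ v ∈ criticalValues F, a < φ v → b ≤ φ v := by
  have hle : ∀ᶠ b in 𝓝[>] a, ∀ v ∈ criticalValues F, a < φ v → b ≤ φ v := by
    refine (eventually_all_finite (criticalValues_finite hF)).2 fun v _ ↦ ?_
    by_cases h : a < φ v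
    · filter_upwards [nhdsWithin_le_nhds (Iic_mem_nhds h)] with b hb _ using hb
    · exact Eventually.of_forall fun _ h' ↦ (h h').elim
  obtain ⟨b, hb, hab⟩ := (hle.and self_mem_nhdsWithin).exists
  exact ⟨b, hab, hb⟩

lemma sheetCount_slice_add_le (hF : F.natDegree ≠ 0) (hHo : IsOpen H) (hH : Convex ℝ H)
    {φ : ℂ →L[ℝ] ℝ} {a b : ℝ} (hne : (H ∩ {w | φ w < b} ∩ (H ∩ {w | a < φ w})).Nonempty)
    (hcrit : ∀ v ∈ criticalValues F, a < φ v → b ≤ φ v) :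
    sheetCount F (H ∩ {w | φ w < b}) + sheetCount F (H ∩ {w | a < φ w}) ≤
      sheetCount F H + F.natDegree := by
  obtain ⟨w, ⟨hw, hwb⟩, -, haw⟩ := hne
  have hunion : H ∩ {w | φ w < b} ∪ H ∩ {w | a < φ w} = H := by
    rw [← Set.inter_union_distrib_left, Set.inter_eq_left]
    exact fun u _ ↦ (lt_or_ge (φ u) b).imp_right ((haw.trans hwb).trans_le ·)
  have h := sheetCount_add_le hF (hHo.inter (isOpen_lt φ.continuous continuous_const))
    (hHo.inter (isOpen_lt continuous_const φ.continuous))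
    (hH.inter (convex_halfSpace_lt φ.isLinear b)) (hH.inter (convex_halfSpace_gt φ.isLinear a))
    (by rwa [hunion]) ⟨w, ⟨hw, hwb⟩, hw, haw⟩
    (Set.disjoint_left.2 fun v hv hvH ↦ (hcrit v hv hvH.2.2).not_gt hvH.1.2)
  rwa [hunion] at h

lemma natDegree_le_sheetCount (hF : F.natDegree ≠ 0) (hHo : IsOpen H) (hH : Convex ℝ H)
    (hne : H.Nonempty) : F.natDegree ≤ sheetCount F H := by
  induction hn : (criticalValues F ∩ H).ncard using Nat.strong_induction_on generalizing H with
  | _ n ih =>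
  by_cases hsub : (criticalValues F ∩ H).Subsingleton
  · obtain ⟨v, hv, hcrit⟩ : ∃ v ∈ H, criticalValues F ∩ H ⊆ {v} := by
      rcases hsub.eq_empty_or_singleton with h | ⟨v, h⟩
      · exact hne.imp fun v hv ↦ ⟨hv, h.trans_subset (Set.empty_subset _)⟩
      · exact ⟨v, (h.symm.subset rfl).2, h.subset⟩
    exact (sheetCount_eq_natDegree hF hHo hH hv hcrit).ge
  obtain ⟨v, ⟨hvC, hvH⟩, v', ⟨hvC', hvH'⟩, hvv'⟩ := Set.not_subsingleton_iff.1 hsub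
  obtain ⟨φ, hφ⟩ := geometric_hahn_banach_point_point hvv'
  obtain ⟨b, hab, hb⟩ := exists_gt_forall_criticalValues_le hF φ (φ v)
  obtain ⟨m, hvm, hmb⟩ := exists_between hab
  obtain ⟨w, hw, rfl⟩ : m ∈ φ '' H :=
    hH.isPreconnected.intermediate_value hvH hvH' φ.continuous.continuousOn
      ⟨hvm.le, hmb.le.trans (hb v' hvC' hφ)⟩
  have hlt {S : Set ℂ} {c : ℂ} (hc : c ∈ criticalValues F ∩ H) (hcS : c ∉ S) :
      (criticalValues F ∩ (H ∩ S)).ncard < n := by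
    rw [← hn]
    refine Set.ncard_lt_ncard ⟨Set.inter_subset_inter_right _ Set.inter_subset_left, fun h ↦ ?_⟩
      ((criticalValues_finite hF).inter_of_left _)
    exact hcS (h hc).2.2
  have hleft := ih _ (hlt (S := {w | φ w < b}) ⟨hvC', hvH'⟩ (hb v' hvC' hφ).not_gt)
    (hHo.inter (isOpen_lt φ.continuous continuous_const))
    (hH.inter (convex_halfSpace_lt φ.isLinear b)) ⟨w, hw, hmb⟩ rfl
  have hright := ih _ (hlt (S := {w | φ v < φ w}) ⟨hvC, hvH⟩ (lt_irrefl (φ v)))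
    (hHo.inter (isOpen_lt continuous_const φ.continuous))
    (hH.inter (convex_halfSpace_gt φ.isLinear (φ v))) ⟨w, hw, hvm⟩ rfl
  have hslice := sheetCount_slice_add_le hF hHo hH ⟨w, ⟨hw, hmb⟩, hw, hvm⟩ hb
  lia

theorem sheetCount_halfPlane (hF : F.natDegree ≠ 0) {φ : ℂ →L[ℝ] ℝ} (hφ : φ ≠ 0) (a : ℝ) :
    sheetCount F {w | a < φ w} = F.natDegree := by
  have hsurj : Function.Surjective φ := LinearMap.surjective (by exact_mod_cast hφ)
  obtain ⟨b, hab, hb⟩ := exists_gt_forall_criticalValues_le hF φ a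
  obtain ⟨m, ham, hmb⟩ := exists_between hab
  obtain ⟨w, rfl⟩ := hsurj m
  have hleft := natDegree_le_sheetCount hF (isOpen_lt φ.continuous continuous_const)
    (convex_halfSpace_lt φ.isLinear b) ⟨w, hmb⟩
  have hright := natDegree_le_sheetCount hF (isOpen_lt continuous_const φ.continuous)
    (convex_halfSpace_gt φ.isLinear a) ⟨w, ham⟩
  have hslice := sheetCount_slice_add_le hF isOpen_univ convex_univ
    ⟨w, ⟨trivial, hmb⟩, trivial, ham⟩ hb
  rw [Set.univ_inter, Set.univ_inter, sheetCount_univ hF] at hslice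
  lia

lemma ramification_trichotomy (F : ℂ[X]) (φ : ℂ → ℝ) (a : ℝ) :
    ramification F {w | φ w < a} + ramification F {w | a < φ w} + ramification F {w | φ w = a} =
      F.natDegree - 1 := by
  have hlt : {w | φ w < a} ∩ {w | a < φ w} = ∅ :=
    Set.eq_empty_of_forall_notMem fun w hw ↦ lt_asymm (a := φ w) hw.1 hw.2
  have hne : {w | φ w < a} ∪ {w | a < φ w} = {w | φ w = a}ᶜ :=
    Set.ext fun w ↦ lt_or_lt_iff_ne (a := φ w)
  have hlt_add := ramification_union_add_inter F {w | φ w < a} {w | a < φ w}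
  have hcompl_add := ramification_union_add_inter F {w | φ w = a}ᶜ {w | φ w = a}
  rw [Set.compl_union_self, Set.compl_inter_self, ramification_univ,
    ramification_empty] at hcompl_add
  rw [hlt, hne, ramification_empty] at hlt_add
  lia

theorem nodalComponents_preimage_compl_line (hF : F.natDegree ≠ 0) {φ : ℂ →L[ℝ] ℝ} (hφ : φ ≠ 0)
    (a : ℝ) : (nodalComponents (F.eval ⁻¹' {w | φ w ≠ a})).Finite ∧
      (nodalComponents (F.eval ⁻¹' {w | φ w ≠ a})).ncard =
        1 + F.natDegree + ramification F {w | φ w = a} := by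
  have hgt := sheetCount_halfPlane hF hφ a
  have hlt := sheetCount_halfPlane hF (neg_ne_zero.2 hφ) (-a)
  simp only [neg_apply, neg_lt_neg_iff] at hlt
  have hlo : IsOpen {w | φ w < a} := isOpen_lt φ.continuous continuous_const
  have hgo : IsOpen {w | a < φ w} := isOpen_lt continuous_const φ.continuous
  have hlfin := finite_nodalComponents_preimage_eval hF hlo
    (convex_halfSpace_lt φ.isLinear a).isPreconnected
  have hgfin := finite_nodalComponents_preimage_eval hF hgo
    (convex_halfSpace_gt φ.isLinear a).isPreconnected
  have hdisj : Disjoint (F.eval ⁻¹' {w | φ w < a}) (F.eval ⁻¹' {w | a < φ w}) :=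
    Set.disjoint_left.2 fun z h h' ↦ lt_asymm (a := φ (F.eval z)) h h'
  have hne : F.eval ⁻¹' {w | φ w ≠ a} = F.eval ⁻¹' {w | φ w < a} ∪ F.eval ⁻¹' {w | a < φ w} :=
    Set.ext fun _ ↦ lt_or_lt_iff_ne.symm
  have hram := ramification_trichotomy F φ a
  rw [hne, nodalComponents_union (hlo.preimage F.continuous) (hgo.preimage F.continuous) hdisj,
    Set.ncard_union_eq (disjoint_nodalComponents hdisj) hlfin hgfin]
  refine ⟨hlfin.union hgfin, ?_⟩
  simp only [sheetCount] at hgt hlt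
  lia

end Polynomials

section RealParts

open Polynomial

/-- The complex coordinate `x₀ + i x₁` of the plane, as a linear form. -/
noncomputable def complexCoordinate : MvPolynomial (Fin 2) ℂ :=
  ∑ i, Complex.basisOneI i • MvPolynomial.X i

/-- The polynomial whose coefficients are the real parts of those of `Q`. -/
noncomputable def coeffwiseRe {n : ℕ} (Q : MvPolynomial (Fin n) ℂ) : MvPolynomial (Fin n) ℝ :=
  ∑ s ∈ Q.support, MvPolynomial.monomial s (MvPolynomial.coeff s Q).re

/-- The real part of the polynomial function `F : ℂ → ℂ`, as a polynomial in the real and imaginary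
parts of the variable. -/
noncomputable def rePoly (F : ℂ[X]) : MvPolynomial (Fin 2) ℝ :=
  coeffwiseRe (aeval complexCoordinate F)

/-- The identification of the complex plane with the Euclidean plane. -/
noncomputable def planeEquiv : ℂ ≃ₜ EuclideanSpace ℝ (Fin 2) :=
  Complex.orthonormalBasisOneI.repr.toHomeomorph

/-- The exponent of the monomial `x₀ ^ i * x₁ ^ j`. -/
noncomputable def bidegree (i j : ℕ) : Fin 2 →₀ ℕ := Finsupp.single 0 i + Finsupp.single 1 j

@[simp] lemma bidegree_apply_zero (i j : ℕ) : bidegree i j 0 = i := by simp [bidegree]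

@[simp] lemma bidegree_apply_one (i j : ℕ) : bidegree i j 1 = j := by simp [bidegree]

lemma eq_bidegree (s : Fin 2 →₀ ℕ) : s = bidegree (s 0) (s 1) := by
  ext i
  fin_cases i <;> simp

lemma planeEquiv_apply (z : ℂ) : ⇑(planeEquiv z) = ![z.re, z.im] :=
  Complex.orthonormalBasisOneI_repr_apply z

lemma polyFun_injective {n : ℕ} : Function.Injective (polyFun (n := n)) := fun _ _ h ↦
  MvPolynomial.funext fun x ↦ congrFun h (WithLp.toLp 2 x)

lemma coeff_coeffwiseRe {n : ℕ} (Q : MvPolynomial (Fin n) ℂ) (s : Fin n →₀ ℕ) :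
    MvPolynomial.coeff s (coeffwiseRe Q) = (MvPolynomial.coeff s Q).re := by
  classical
  simp only [coeffwiseRe, MvPolynomial.coeff_sum, MvPolynomial.coeff_monomial, Finset.sum_ite_eq']
  split_ifs with h
  · rfl
  · rw [MvPolynomial.notMem_support_iff.1 h, Complex.zero_re]

lemma eval_coeffwiseRe {n : ℕ} (Q : MvPolynomial (Fin n) ℂ) (x : Fin n → ℝ) :
    MvPolynomial.eval x (coeffwiseRe Q) = (MvPolynomial.eval (fun i ↦ (x i : ℂ)) Q).re := by
  rw [coeffwiseRe, map_sum, MvPolynomial.eval_eq', Complex.re_sum]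
  refine Finset.sum_congr rfl fun s _ ↦ ?_
  rw [MvPolynomial.eval_monomial, Finsupp.prod_fintype _ _ fun _ ↦ pow_zero _]
  simp only [← Complex.ofReal_pow, ← Complex.ofReal_prod, Complex.re_mul_ofReal]

lemma pderiv_coeffwiseRe {n : ℕ} (Q : MvPolynomial (Fin n) ℂ) (i : Fin n) :
    MvPolynomial.pderiv i (coeffwiseRe Q) = coeffwiseRe (MvPolynomial.pderiv i Q) := by
  ext s
  rw [coeff_coeffwiseRe, MvPolynomial.coeff_pderiv, MvPolynomial.coeff_pderiv, coeff_coeffwiseRe,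
    ← Nat.cast_succ, ← Nat.cast_succ, ← Complex.ofReal_natCast, Complex.re_mul_ofReal]

lemma pderiv_aeval_complexCoordinate (F : ℂ[X]) (i : Fin 2) :
    MvPolynomial.pderiv i (aeval complexCoordinate F) =
      aeval complexCoordinate (C (Complex.basisOneI i) * F.derivative) := by
  have hcoord : MvPolynomial.pderiv i complexCoordinate = MvPolynomial.C (Complex.basisOneI i) := by
    fin_cases i <;> simp [complexCoordinate, MvPolynomial.pderiv_X, MvPolynomial.smul_eq_C_mul]
  rw [(MvPolynomial.pderiv i).map_aeval, hcoord]
  simp [mul_comm]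

lemma pderiv_rePoly (F : ℂ[X]) (i : Fin 2) :
    MvPolynomial.pderiv i (rePoly F) = rePoly (C (Complex.basisOneI i) * F.derivative) := by
  rw [rePoly, pderiv_coeffwiseRe, pderiv_aeval_complexCoordinate, rePoly]

lemma polyFun_rePoly (F : ℂ[X]) (z : ℂ) :
    polyFun (rePoly F) (planeEquiv z) = (F.eval z).re := by
  have hcoord : MvPolynomial.aeval (fun i ↦ (planeEquiv z i : ℂ)) complexCoordinate = z := by
    simp [complexCoordinate, planeEquiv_apply, mul_comm Complex.I]
  rw [polyFun, rePoly, eval_coeffwiseRe, ← MvPolynomial.coe_aeval_eq_eval, RingHom.coe_coe,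
    ← aeval_algHom_apply, hcoord, coe_aeval_eq_eval]

lemma planeEquiv_mem_singSet_rePoly {F : ℂ[X]} {z : ℂ} :
    planeEquiv z ∈ singSet (rePoly F) ↔ (F.eval z).re = 0 ∧ F.derivative.eval z = 0 := by
  change (_ ∧ _) ↔ _
  simp only [pderiv_rePoly, polyFun_rePoly, Fin.forall_fin_two]
  simp [Complex.ext_iff]

lemma coeff_rePoly (F : ℂ[X]) (i j : ℕ) :
    MvPolynomial.coeff (bidegree i j) (rePoly F) =
      ((i + j).choose i * (Complex.I ^ j * F.coeff (i + j)).re) := by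
  have hsum : (bidegree i j).sum (fun _ m ↦ m) = i + j := by simp [Finsupp.sum_fintype]
  have hprod : (bidegree i j).prod (fun r m ↦ Complex.basisOneI r ^ m) = Complex.I ^ j := by
    simp [Finsupp.prod_fintype]
  have hmul : (bidegree i j).multinomial = (i + j).choose i := by
    rw [← Finsupp.multinomial_of_support_subset (Finset.subset_univ _),
      show (Finset.univ : Finset (Fin 2)) = {0, 1} from rfl, Nat.binomial_eq_choose zero_ne_one]
    simp
  simp only [rePoly, coeff_coeffwiseRe, aeval_eq_sum_range, MvPolynomial.coeff_sum,
    MvPolynomial.coeff_smul, complexCoordinate,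
    MvPolynomial.coeff_linearCombination_X_pow_of_fintype, hsum, hprod, hmul, smul_eq_mul, mul_ite,
    mul_zero, Finset.sum_ite_eq, Finset.mem_range]
  split_ifs with h
  · rw [mul_left_comm, ← Complex.ofReal_natCast, Complex.re_ofReal_mul, mul_comm (F.coeff _)]
  · rw [coeff_eq_zero_of_natDegree_lt (by lia), mul_zero, Complex.zero_re, mul_zero]

lemma isHarmonicPoly_rePoly (F : ℂ[X]) : IsHarmonicPoly (rePoly F) := by
  have hone : C (Complex.basisOneI 0) * derivative (C (Complex.basisOneI 0) * derivative F) =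
      derivative (derivative F) := by
    simp
  have hI : C (Complex.basisOneI 1) * derivative (C (Complex.basisOneI 1) * derivative F) =
      -derivative (derivative F) := by
    simp [← mul_assoc, ← C_mul]
  ext s
  rw [eq_bidegree s]
  simp only [pderiv_rePoly, Fin.sum_univ_two, hone, hI, MvPolynomial.coeff_add, coeff_rePoly,
    coeff_neg, mul_neg, Complex.neg_re, add_neg_cancel, MvPolynomial.coeff_zero]

lemma rePoly_sub_C {a : ℂ} (F : ℂ[X]) (ha : a.re = 0) : rePoly (F - C a) = rePoly F := by
  refine polyFun_injective (funext fun x ↦ ?_)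
  obtain ⟨z, rfl⟩ := planeEquiv.surjective x
  rw [polyFun_rePoly, polyFun_rePoly, eval_sub, eval_C, Complex.sub_re, ha, sub_zero]

lemma coeff_bidegree_zero_rePoly (F : ℂ[X]) (i : ℕ) :
    MvPolynomial.coeff (bidegree i 0) (rePoly F) = (F.coeff i).re := by
  simp [coeff_rePoly]

lemma coeff_bidegree_one_rePoly (F : ℂ[X]) (i : ℕ) :
    MvPolynomial.coeff (bidegree i 1) (rePoly F) = -((i + 1) * (F.coeff (i + 1)).im) := by
  simp [coeff_rePoly]

lemma IsHarmonicPoly.coeff_add_two {P : MvPolynomial (Fin 2) ℝ} (hP : IsHarmonicPoly P)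
    (i j : ℕ) : ((j : ℝ) + 1) * (j + 2) * MvPolynomial.coeff (bidegree i (j + 2)) P =
      -((i + 1) * (i + 2) * MvPolynomial.coeff (bidegree (i + 2) j) P) := by
  have h := congrArg (MvPolynomial.coeff (bidegree i j)) hP
  have hi : bidegree i j + Finsupp.single 0 1 + Finsupp.single 0 1 = bidegree (i + 2) j := by
    ext k; fin_cases k <;> simp
  have hj : bidegree i j + Finsupp.single 1 1 + Finsupp.single 1 1 = bidegree i (j + 2) := by
    ext k; fin_cases k <;> simp
  simp only [Fin.sum_univ_two, MvPolynomial.coeff_add, MvPolynomial.coeff_pderiv, hi, hj,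
    MvPolynomial.coeff_zero, Finsupp.add_apply, bidegree_apply_zero, bidegree_apply_one,
    Finsupp.single_eq_same, Nat.cast_add, Nat.cast_one] at h
  linarith

lemma IsHarmonicPoly.eq_of_coeff_eq {P Q : MvPolynomial (Fin 2) ℝ} (hP : IsHarmonicPoly P)
    (hQ : IsHarmonicPoly Q)
    (h₀ : ∀ i, MvPolynomial.coeff (bidegree i 0) P = MvPolynomial.coeff (bidegree i 0) Q)
    (h₁ : ∀ i, MvPolynomial.coeff (bidegree i 1) P = MvPolynomial.coeff (bidegree i 1) Q) :
    P = Q := by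
  suffices h : ∀ j i, MvPolynomial.coeff (bidegree i j) P = MvPolynomial.coeff (bidegree i j) Q by
    ext s
    rw [eq_bidegree s, h]
  intro j
  induction j using Nat.twoStepInduction with
  | zero => exact h₀
  | one => exact h₁
  | more j ih _ =>
    intro i
    have h := hP.coeff_add_two i j
    rw [ih, ← hQ.coeff_add_two] at h
    exact mul_left_cancel₀ (by positivity) h

lemma exists_polynomial_coeff_eq {R : Type*} [Semiring R] {c : ℕ → R} {N : ℕ}
    (hc : ∀ k, N < k → c k = 0) : ∃ F : R[X], ∀ k, F.coeff k = c k := by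
  refine ⟨∑ k ∈ Finset.range (N + 1), monomial k (c k), fun k ↦ ?_⟩
  simp only [finsetSum_coeff, coeff_monomial, Finset.sum_ite_eq', Finset.mem_range]
  split_ifs with h
  · rfl
  · exact (hc k (by lia)).symm

lemma IsHarmonicPoly.exists_eq_rePoly {P : MvPolynomial (Fin 2) ℝ} (hP : IsHarmonicPoly P) :
    ∃ F : ℂ[X], P = rePoly F := by
  have hcoeff i j (h : P.totalDegree < i + j) : MvPolynomial.coeff (bidegree i j) P = 0 := by
    refine MvPolynomial.coeff_eq_zero_of_totalDegree_lt (h.trans_eq ?_)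
    rw [← Finsupp.degree_apply, Finsupp.degree_eq_sum, Fin.sum_univ_two, bidegree_apply_zero,
      bidegree_apply_one]
  -- For `k = 0` the imaginary part, which `rePoly F` does not see, is set to `0` by `_ / 0 = 0`.
  obtain ⟨F, hF⟩ := exists_polynomial_coeff_eq (N := P.totalDegree) (c := fun k ↦
    ⟨MvPolynomial.coeff (bidegree k 0) P, -(MvPolynomial.coeff (bidegree (k - 1) 1) P / k)⟩)
    fun k hk ↦ Complex.ext (hcoeff k 0 hk) (by simp [hcoeff (k - 1) 1 (by lia)])
  refine ⟨F, hP.eq_of_coeff_eq (isHarmonicPoly_rePoly F) (fun i ↦ ?_) fun i ↦ ?_⟩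
  · rw [coeff_bidegree_zero_rePoly, hF]
  · rw [coeff_bidegree_one_rePoly, hF]
    push_cast [Nat.add_sub_cancel]
    field_simp

lemma homogeneousComponent_rePoly_eq_zero_iff {F : ℂ[X]} {k : ℕ}
    (hk : k = 0 → (F.coeff k).im = 0) :
    MvPolynomial.homogeneousComponent k (rePoly F) = 0 ↔ F.coeff k = 0 := by
  have hcoeff (i j : ℕ) : MvPolynomial.coeff (bidegree i j)
      (MvPolynomial.homogeneousComponent k (rePoly F)) =
        if i + j = k then MvPolynomial.coeff (bidegree i j) (rePoly F) else 0 := by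
    rw [MvPolynomial.coeff_homogeneousComponent, Finsupp.degree_eq_sum, Fin.sum_univ_two,
      bidegree_apply_zero, bidegree_apply_one]
  constructor
  · intro h
    have hre := hcoeff k 0
    rw [h, if_pos (add_zero k), MvPolynomial.coeff_zero, coeff_bidegree_zero_rePoly] at hre
    refine Complex.ext hre.symm ?_
    cases k with
    | zero => exact hk rfl
    | succ m =>
      have him := hcoeff m 1
      rw [h, if_pos rfl, MvPolynomial.coeff_zero, coeff_bidegree_one_rePoly, eq_comm,
        neg_eq_zero] at him
      exact (mul_eq_zero_iff_left (by positivity)).1 him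
  · intro h
    ext s
    rw [eq_bidegree s, hcoeff]
    split_ifs with hs
    · rw [coeff_rePoly, hs, h, mul_zero, Complex.zero_re, mul_zero, MvPolynomial.coeff_zero]
    · rfl

lemma totalDegree_rePoly (F : ℂ[X]) : (rePoly F).totalDegree = F.natDegree := by
  refine le_antisymm ?_ ?_
  · refine Finset.sup_le fun s hs ↦ ?_
    rw [MvPolynomial.mem_support_iff, eq_bidegree s, coeff_rePoly] at hs
    rw [Finsupp.sum_fintype _ _ fun _ ↦ rfl, Fin.sum_univ_two]
    exact le_natDegree_of_ne_zero fun h ↦ hs (by simp [h])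
  · by_contra! h
    have hF : F.natDegree ≠ 0 := h.ne_bot
    have hzero := MvPolynomial.homogeneousComponent_eq_zero _ _ h
    rw [homogeneousComponent_rePoly_eq_zero_iff hF.elim, coeff_natDegree,
      leadingCoeff_eq_zero] at hzero
    exact hF (hzero ▸ natDegree_zero)

lemma polyFun_translate {n : ℕ} (P : MvPolynomial (Fin n) ℝ) (a x : EuclideanSpace ℝ (Fin n)) :
    polyFun (MvPolynomial.aeval (fun i ↦ MvPolynomial.X i + MvPolynomial.C (a i)) P) x =
      polyFun P (x + a) := by
  rw [polyFun, polyFun, ← MvPolynomial.coe_aeval_eq_eval, ← MvPolynomial.coe_aeval_eq_eval,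
    RingHom.coe_coe, RingHom.coe_coe, ← AlgHom.comp_apply, MvPolynomial.comp_aeval]
  simp

lemma translate_rePoly (F : ℂ[X]) (a : ℂ) :
    MvPolynomial.aeval (fun i ↦ MvPolynomial.X i + MvPolynomial.C (planeEquiv a i)) (rePoly F) =
      rePoly (taylor a F) := by
  refine polyFun_injective (funext fun x ↦ ?_)
  obtain ⟨z, rfl⟩ := planeEquiv.surjective x
  have hadd : planeEquiv (z + a) = planeEquiv z + planeEquiv a :=
    map_add Complex.orthonormalBasisOneI.repr z a
  rw [polyFun_translate, ← hadd, polyFun_rePoly, polyFun_rePoly, taylor_eval]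

lemma vanishOrder_rePoly {F : ℂ[X]} (hF : F.natDegree ≠ 0) {a : ℂ} (ha : (F.eval a).re = 0) :
    vanishOrder (rePoly F) (planeEquiv a) = F.derivative.rootMultiplicity a + 1 := by
  rw [← rootMultiplicity_sub_C hF, rootMultiplicity_eq_natTrailingDegree, ← taylor_apply,
    ← rePoly_sub_C F ha, vanishOrder, translate_rePoly]
  set G := taylor a (F - C (F.eval a))
  have hG : G ≠ 0 := by
    apply ne_zero_of_natDegree_gt (n := 0)
    rw [natDegree_taylor, natDegree_sub_C]
    exact Nat.pos_of_ne_zero hF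
  have hzero : G.coeff 0 = 0 := by rw [taylor_coeff_zero, eval_sub, eval_C, sub_self]
  have hcomp (k : ℕ) : MvPolynomial.homogeneousComponent k (rePoly G) ≠ 0 ↔ G.coeff k ≠ 0 :=
    (homogeneousComponent_rePoly_eq_zero_iff (by rintro rfl; rw [hzero, Complex.zero_im])).not
  simp only [hcomp]
  exact IsLeast.csInf_eq ⟨mt coeff_natTrailingDegree_eq_zero.1 hG,
    fun k hk ↦ natTrailingDegree_le_of_ne_zero hk⟩

end RealParts

section NodalSets

open Polynomial

lemma setOf_polyFun_rePoly_ne_zero (F : ℂ[X]) :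
    {x | polyFun (rePoly F) x ≠ 0} = planeEquiv '' (F.eval ⁻¹' {w | Complex.reCLM w ≠ 0}) := by
  ext x
  obtain ⟨z, rfl⟩ := planeEquiv.surjective x
  rw [planeEquiv.injective.mem_set_image, Set.mem_ofPred_eq, polyFun_rePoly]
  rfl

lemma singSet_rePoly (F : ℂ[X]) :
    singSet (rePoly F) = planeEquiv '' {z | (F.eval z).re = 0 ∧ F.derivative.eval z = 0} := by
  ext x
  obtain ⟨z, rfl⟩ := planeEquiv.surjective x
  rw [planeEquiv.injective.mem_set_image, planeEquiv_mem_singSet_rePoly]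
  rfl

lemma singSet_rePoly_finite {F : ℂ[X]} (hF : F.natDegree ≠ 0) : (singSet (rePoly F)).Finite := by
  rw [singSet_rePoly]
  exact ((finite_setOfPred_isRoot (derivative_ne_zero.2 hF)).subset fun _ hz ↦ hz.2).image _

lemma finsum_vanishOrder_rePoly {F : ℂ[X]} (hF : F.natDegree ≠ 0) :
    ∑ᶠ z ∈ singSet (rePoly F), (vanishOrder (rePoly F) z - 1) =
      ramification F {w | Complex.reCLM w = 0} := by
  rw [singSet_rePoly, finsum_mem_image planeEquiv.injective.injOn]
  trans ∑ᶠ z ∈ {z | (F.eval z).re = 0 ∧ F.derivative.eval z = 0}, F.derivative.rootMultiplicity z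
  · exact finsum_mem_congr rfl fun z hz ↦ by
      rw [vanishOrder_rePoly hF hz.1, Nat.add_sub_cancel]
  · refine finsum_mem_inter_support_eq' _ _ _ fun z hz ↦ and_iff_left ?_
    by_contra h
    exact hz (rootMultiplicity_eq_zero h)

lemma nodalComponents_polyFun_rePoly {F : ℂ[X]} (hF : F.natDegree ≠ 0) :
    (nodalComponents {x | polyFun (rePoly F) x ≠ 0}).Finite ∧
      (nodalComponents {x | polyFun (rePoly F) x ≠ 0}).ncard =
        1 + F.natDegree + ramification F {w | Complex.reCLM w = 0} := by
  have hre : Complex.reCLM ≠ 0 := fun h ↦ one_ne_zero (α := ℝ) (congrArg (· 1) h)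
  obtain ⟨hfin, hcard⟩ := nodalComponents_preimage_compl_line hF hre 0
  rw [setOf_polyFun_rePoly_ne_zero, nodalComponents_image,
    Set.ncard_image_of_injective _ (Set.image_injective.2 planeEquiv.injective)]
  exact ⟨hfin.image _, hcard⟩

end NodalSets

/-- **The algebraic formula (5.1)** of Proposition 5.3: for a nonconstant harmonic polynomial
`u` of degree `d` on ℝ², the singular set is finite, `{u ≠ 0}` has finitely many connected
components, and their number `k` satisfies `k = 1 + d + ∑_{z ∈ S(u)} (ord_z(u) - 1)`. -/
theorem euler_formula_harmonic_polynomial (d : ℕ) (hd : 1 ≤ d)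
    (P : MvPolynomial (Fin 2) ℝ) (hP : IsHarmonicPoly P) (hdeg : P.totalDegree = d) :
    (singSet P).Finite ∧
    (nodalComponents {x | polyFun P x ≠ 0}).Finite ∧
    (nodalComponents {x | polyFun P x ≠ 0}).ncard =
      1 + d + ∑ᶠ z ∈ singSet P, (vanishOrder P z - 1) := by
  obtain ⟨F, rfl⟩ := hP.exists_eq_rePoly
  rw [totalDegree_rePoly] at hdeg
  subst hdeg
  have hF : F.natDegree ≠ 0 := Nat.one_le_iff_ne_zero.1 hd
  rw [finsum_vanishOrder_rePoly hF]
  exact ⟨singSet_rePoly_finite hF, nodalComponents_polyFun_rePoly hF⟩
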